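/- arXiv:2306.02803 — 3 statements merged into one kernel-verified Lean document; each statement's English description precedes it below -/
import Mathlib

section
/- Let ε > 0, δ > 1, r ∈ (0,1], and let ψ : ℝ → ℝ be an infinitely differentiable nonnegative function vanishing outside the interval (ε δ⁻¹, ε) with ∫_ℝ ψ(y) dy = 1. Define u(x) = ∫_ℝ |x − y|^r ψ(y) dy, i.e. u is the convolution of the function x ↦ |x|^r with ψ. Then u is twice continuously differentiable on ℝ, and for every x ∈ ℝ one has |x|^r ≤ ε^r + u(x) and u(x) ≤ |x|^r + ε^r. -/
open MeasureTheory Real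

/-!
A power `‖x‖ ^ r` with `r ≤ 1` is `r`-Hölder with constant `1`, because `t ↦ t ^ r` is subadditive.
Averaging an `r`-Hölder function against a probability density supported in the ball of radius `R`
only looks at points within distance `R`, so it moves no value by more than a multiple of `R ^ r`,
while the average inherits the smoothness of the density.
-/

open Function Metric ContinuousLinearMap
open scoped NNReal Convolution

theorem norm_rpow_le_norm_sub_rpow_add_norm_rpow {E : Type*} [SeminormedAddCommGroup E] {r : ℝ}
    (hr0 : 0 ≤ r) (hr1 : r ≤ 1) (x y : E) : ‖x‖ ^ r ≤ ‖x - y‖ ^ r + ‖y‖ ^ r :=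
  calc ‖x‖ ^ r ≤ (‖x - y‖ + ‖y‖) ^ r := by gcongr; exact norm_le_norm_sub_add x y
    _ ≤ ‖x - y‖ ^ r + ‖y‖ ^ r :=
      rpow_add_le_add_rpow (norm_nonneg _) (norm_nonneg _) hr0 hr1

theorem dist_norm_rpow_le_dist_rpow {E : Type*} [SeminormedAddCommGroup E] {r : ℝ}
    (hr0 : 0 ≤ r) (hr1 : r ≤ 1) (x y : E) : dist (‖x‖ ^ r) (‖y‖ ^ r) ≤ dist x y ^ r := by
  have hxy := norm_rpow_le_norm_sub_rpow_add_norm_rpow hr0 hr1 x y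
  have hyx := norm_rpow_le_norm_sub_rpow_add_norm_rpow hr0 hr1 y x
  rw [norm_sub_rev] at hyx
  rw [Real.dist_eq, dist_eq_norm, abs_sub_le_iff]
  constructor <;> linarith

theorem holderWith_norm_rpow {E : Type*} [SeminormedAddCommGroup E] {r : ℝ≥0} (hr : r ≤ 1) :
    HolderWith 1 r fun x : E ↦ ‖x‖ ^ (r : ℝ) := by
  intro x y
  rw [ENNReal.coe_one, one_mul, edist_dist, edist_dist,
    ENNReal.ofReal_rpow_of_nonneg dist_nonneg r.coe_nonneg]
  exact ENNReal.ofReal_le_ofReal (dist_norm_rpow_le_dist_rpow r.coe_nonneg hr x y)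

theorem dist_convolution_le_of_holderWith {G F : Type*}
    [SeminormedAddCommGroup G] [SecondCountableTopology G] [MeasurableSpace G] [BorelSpace G]
    [NormedAddCommGroup F] [NormedSpace ℝ F] [CompleteSpace F]
    {μ : Measure G} [SFinite μ] [μ.IsAddLeftInvariant] {C r : ℝ≥0} {R : ℝ} {ψ : G → ℝ} {g : G → F}
    (hR : 0 ≤ R) (hψ_supp : support ψ ⊆ ball 0 R) (hψ_nonneg : ∀ x, 0 ≤ ψ x)
    (hψ_int : ∫ y, ψ y ∂μ = 1) (hg_meas : AEStronglyMeasurable g μ) (hg : HolderWith C r g)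
    (x : G) :
    dist ((ψ ⋆[lsmul ℝ ℝ, μ] g) x) (g x) ≤ C * R ^ (r : ℝ) :=
  dist_convolution_le (by positivity) hψ_supp hψ_nonneg hψ_int hg_meas fun _ hy ↦
    hg.dist_le_of_le (mem_ball.1 hy).le

theorem stmt_1_general {E : Type*} [NormedAddCommGroup E] [NormedSpace ℝ E]
    [FiniteDimensional ℝ E] [MeasurableSpace E] [BorelSpace E] {μ : Measure E} [μ.IsAddHaarMeasure]
    {R r : ℝ} (hR : 0 ≤ R) (hr0 : 0 ≤ r) (hr1 : r ≤ 1) {n : ℕ∞} {ψ : E → ℝ}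
    (hψ_smooth : ContDiff ℝ n ψ) (hψ_nonneg : ∀ x, 0 ≤ ψ x) (hψ_supp : support ψ ⊆ ball 0 R)
    (hψ_int : ∫ y, ψ y ∂μ = 1) {u : E → ℝ} (hu : ∀ x, u x = ∫ y, ‖x - y‖ ^ r * ψ y ∂μ) :
    ContDiff ℝ n u ∧ ∀ x, ‖x‖ ^ r ≤ R ^ r + u x ∧ u x ≤ ‖x‖ ^ r + R ^ r := by
  lift r to ℝ≥0 using hr0
  have : ProperSpace E := FiniteDimensional.proper_real E
  have hcont : Continuous fun x : E ↦ ‖x‖ ^ (r : ℝ) :=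
    continuous_norm.rpow_const fun _ ↦ Or.inr r.coe_nonneg
  have hu_conv : u = ψ ⋆[lsmul ℝ ℝ, μ] fun x ↦ ‖x‖ ^ (r : ℝ) := by
    ext x
    simp only [hu, convolution_lsmul, smul_eq_mul, mul_comm]
  have hψ_compact : HasCompactSupport ψ :=
    .of_support_subset_isCompact (isCompact_closedBall 0 R) (hψ_supp.trans ball_subset_closedBall)
  refine ⟨hu_conv ▸ hψ_compact.contDiff_convolution_left _ hψ_smooth hcont.locallyIntegrable,
    fun x ↦ ?_⟩
  have hdist : |u x - ‖x‖ ^ (r : ℝ)| ≤ R ^ (r : ℝ) := by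
    simpa only [hu_conv, Real.dist_eq, NNReal.coe_one, one_mul] using
      dist_convolution_le_of_holderWith hR hψ_supp hψ_nonneg hψ_int hcont.aestronglyMeasurable
        (holderWith_norm_rpow hr1) x
  rw [abs_sub_le_iff] at hdist
  constructor <;> linarith

theorem support_subset_ball_of_eq_zero_of_notMem_Ioo {M : Type*} [Zero M] {a b : ℝ} (ha : 0 ≤ a)
    {f : ℝ → M} (hf : ∀ x, x ∉ Set.Ioo a b → f x = 0) : support f ⊆ ball 0 b := by
  intro x hx
  obtain ⟨hax, hxb⟩ : x ∈ Set.Ioo a b := not_imp_comm.1 (hf x) hx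
  rwa [mem_ball_zero_iff, Real.norm_of_nonneg (ha.trans hax.le)]

/-- If `ψ` is a smooth nonnegative function vanishing outside `(ε δ⁻¹, ε)` with total
integral `1`, and `u` is the convolution of `x ↦ |x|^r` with `ψ` (for `r ∈ (0,1]`), then
`u` is `C²` and `|x|^r ≤ ε^r + u x` and `u x ≤ |x|^r + ε^r` for every `x`. -/
theorem stmt_1 (ε δ r : ℝ) (hε : 0 < ε) (hδ : 1 < δ) (hr0 : 0 < r) (hr1 : r ≤ 1)
    (ψ : ℝ → ℝ) (hψ_smooth : ContDiff ℝ (⊤ : ℕ∞) ψ) (hψ_nonneg : ∀ x, 0 ≤ ψ x)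
    (hψ_supp : ∀ x, x ∉ Set.Ioo (ε * δ⁻¹) ε → ψ x = 0)
    (hψ_int : ∫ y, ψ y = 1)
    (u : ℝ → ℝ) (hu : ∀ x, u x = ∫ y, |x - y| ^ r * ψ y) :
    ContDiff ℝ 2 u ∧ ∀ x : ℝ, |x| ^ r ≤ ε ^ r + u x ∧ u x ≤ |x| ^ r + ε ^ r := by
  have hψ_ball : support ψ ⊆ ball 0 ε :=
    support_subset_ball_of_eq_zero_of_notMem_Ioo (by positivity) hψ_supp
  exact stmt_1_general hε.le hr0.le hr1 (n := 2) (hψ_smooth.of_le (by exact_mod_cast le_top))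
    hψ_nonneg hψ_ball hψ_int hu
end

section
/- Let (Ω, F, P) be a probability space with a filtration (F_t)_{t ∈ [0,T]}, and let Z = (Z_t)_{t ∈ [0,T]} be a real-valued adapted process with right-continuous (càdlàg) sample paths such that E[|Z_t|] < ∞ for every t ∈ [0,T]. Suppose V ∈ ℝ is such that for every finite subdivision 0 = t₀ < t₁ < ⋯ < t_{n+1} = T one has E[ Σ_{i=0}^{n} | E[ Z_{t_i} − Z_{t_{i+1}} | F_{t_i} ] | ] ≤ V. Then for every h > 0, h · P( sup_{t ∈ [0,T]} |Z_t| > h ) ≤ V + E[ |Z_T| ]. -/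
open MeasureTheory Real Set

/-!
Fix a subdivision `t₀ < ⋯ < t_{n+1}` and let `A k` be the event that `‖Z‖` has exceeded `h` at one
of the times `t₀, …, t_k`. The bound
`h * P (A k) ≤ E[‖Z_{t_k}‖; A k] + ∑ i < k, E‖E[Z_{t_i} - Z_{t_{i+1}} | ℱ_{t_i}]‖`
propagates from `k` to `k + 1`: on `A k ∈ ℱ_{t_k}` the contraction property of conditional
expectation replaces `Z_{t_k}` by `Z_{t_{k+1}}` at the cost of one more summand, while on
`A (k + 1) \ A k` Markov's inequality applies directly. Right-continuity reduces the supremum over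
all times to one over a countable set, which is exhausted by finite subdivisions.
-/

section

open Filter TopologicalSpace
open scoped ENNReal Topology

section TimeSets

variable {ι : Type*} [LinearOrder ι] {a b : ι}

lemma exists_monotone_subdivision (hab : a < b) {F : Finset ι} (hF : (F : Set ι) ⊆ Icc a b) :
    ∃ (n : ℕ) (t : ℕ → ι), Monotone t ∧ t 0 = a ∧ t (n + 1) = b ∧ (∀ i ≤ n, t i < t (i + 1)) ∧
      (∀ i, t i ∈ Icc a b) ∧ ∀ s ∈ F, ∃ i ≤ n + 1, t i = s := by
  classical
  set G : Finset ι := insert a (insert b F) with hG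
  have hG_sub : ∀ s ∈ G, s ∈ Icc a b := by
    simp only [hG, Finset.mem_insert, forall_eq_or_imp]
    exact ⟨left_mem_Icc.2 hab.le, right_mem_Icc.2 hab.le, fun s hs => hF hs⟩
  have haG : a ∈ G := Finset.mem_insert_self a _
  have hbG : b ∈ G := Finset.mem_insert_of_mem (Finset.mem_insert_self b F)
  obtain ⟨n, hn⟩ : ∃ n, G.card = n + 2 :=
    Nat.exists_eq_add_of_le' (Finset.one_lt_card.2 ⟨a, haG, b, hbG, hab.ne⟩)
  let f := G.orderEmbOfFin hn
  let t : ℕ → ι := fun i => f ⟨min i (n + 1), by omega⟩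
  have ht_mono : Monotone t := fun i j hij =>
    f.monotone (Fin.mk_le_mk.2 (min_le_min_right (n + 1) hij))
  have ht_mem (i : ℕ) : t i ∈ Icc a b := hG_sub _ (G.orderEmbOfFin_mem hn _)
  have ht_surj : ∀ s ∈ G, ∃ i ≤ n + 1, t i = s := by
    intro s hs
    obtain ⟨i, rfl⟩ : s ∈ range f := by rwa [G.range_orderEmbOfFin hn]
    exact ⟨i, by omega, congrArg f (Fin.ext (min_eq_left (by omega)))⟩
  refine ⟨n, t, ht_mono, ?_, ?_, fun i hi => ?_, ht_mem, fun s hs => ht_surj s (by simp [hG, hs])⟩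
  · obtain ⟨i, -, hi⟩ := ht_surj a haG
    exact ((ht_mono zero_le).trans_eq hi).antisymm (ht_mem 0).1
  · obtain ⟨i, hi_le, hi⟩ := ht_surj b hbG
    exact (ht_mem (n + 1)).2.antisymm (hi.symm.trans_le (ht_mono hi_le))
  · exact f.strictMono (Fin.mk_lt_mk.2 (by omega))

variable [TopologicalSpace ι]

lemma exists_mem_of_forall_frequently_nhdsGE {X : Type*} [TopologicalSpace X] {S : Set ι}
    (hS_sub : S ⊆ Icc a b) (hS : ∀ t ∈ Icc a b, ∃ᶠ s in 𝓝[≥] t, s ∈ S) {f : ι → X}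
    (hf : ∀ t ∈ Ico a b, ContinuousWithinAt f (Ici t) t) {U : Set X} (hU : IsOpen U)
    {t : ι} (ht : t ∈ Icc a b) (htU : f t ∈ U) : ∃ s ∈ S, f s ∈ U := by
  rcases ht.2.eq_or_lt with rfl | htb
  · obtain ⟨s, hsS, hts⟩ := ((hS t ht).and_eventually self_mem_nhdsWithin).exists
    exact ⟨s, hsS, (hS_sub hsS).2.antisymm hts ▸ htU⟩
  · exact ((hS t ht).and_eventually ((hf t ⟨ht.1, htb⟩).eventually_mem (hU.mem_nhds htU))).exists

variable [OrderTopology ι] [SecondCountableTopology ι]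

lemma exists_countable_subset_Icc_frequently_nhdsGE (hab : a ≤ b) :
    ∃ S ⊆ Icc a b, S.Countable ∧ ∀ t ∈ Icc a b, ∃ᶠ s in 𝓝[≥] t, s ∈ S := by
  obtain ⟨D, hD_countable, hD_dense⟩ := exists_countable_dense ι
  -- A time with an immediate successor is not a limit from the right, so it must itself be in `S`.
  refine ⟨insert b ((D ∪ {x | ∃ y, x ⋖ y}) ∩ Icc a b),
    insert_subset (right_mem_Icc.2 hab) inter_subset_right,
    ((hD_countable.union countable_setOfPred_covBy_right).mono inter_subset_left).insert b,
    fun t ht => ?_⟩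
  by_cases htS : t ∈ insert b ((D ∪ {x | ∃ y, x ⋖ y}) ∩ Icc a b)
  · exact fun hev => hev.self_of_nhdsWithin self_mem_Ici htS
  have htb : t < b := ht.2.lt_of_ne fun h => htS (Or.inl h)
  have ht_not_covBy (u : ι) : ¬ t ⋖ u := fun h => htS (Or.inr ⟨Or.inr ⟨u, h⟩, ht⟩)
  refine Frequently.filter_mono (frequently_iff.2 fun hU => ?_)
    (nhdsWithin_mono t Ioi_subset_Ici_self)
  obtain ⟨u, htu, huU⟩ := (mem_nhdsGT_iff_exists_Ioo_subset' htb).1 hU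
  obtain ⟨s, hs, hsD⟩ := hD_dense.inter_open_nonempty _ isOpen_Ioo
    (not_covBy_iff (lt_min htu htb) |>.1 (ht_not_covBy (min u b)))
  exact ⟨s, huU ⟨hs.1, hs.2.trans_le (min_le_left u b)⟩,
    Or.inr ⟨Or.inl hsD, ht.1.trans hs.1.le, hs.2.le.trans (min_le_right u b)⟩⟩

end TimeSets

section Measure

variable {Ω : Type*} {m0 : MeasurableSpace Ω} {μ : Measure Ω}

lemma measure_iUnion_eq_iSup_finset {κ : Type*} [Countable κ] (s : κ → Set Ω) :
    μ (⋃ i, s i) = ⨆ F : Finset κ, μ (⋃ i ∈ F, s i) := by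
  rw [iUnion_eq_iUnion_finset s, Monotone.measure_iUnion]
  exact fun F G hFG => biUnion_subset_biUnion_left hFG

lemma mul_measure_le_setLIntegral {ε : ℝ≥0∞} {f : Ω → ℝ≥0∞} {s : Set Ω} (hs : MeasurableSet s)
    (hf : ∀ ω ∈ s, ε ≤ f ω) : ε * μ s ≤ ∫⁻ ω in s, f ω ∂μ := by
  rw [← setLIntegral_const]
  exact setLIntegral_mono' hs hf

end Measure

section CondExp

variable {Ω E : Type*} [NormedAddCommGroup E] [NormedSpace ℝ E] [CompleteSpace E]
  {m m0 : MeasurableSpace Ω} {μ : Measure Ω} {s : Set Ω}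

lemma setLIntegral_enorm_condExp_le (hs : MeasurableSet[m] s) (f : Ω → E) :
    ∫⁻ ω in s, ‖μ[f | m] ω‖ₑ ∂μ ≤ ∫⁻ ω in s, ‖f ω‖ₑ ∂μ := by
  by_cases hf : Integrable f μ
  · rw [← ofReal_integral_norm_eq_lintegral_enorm integrable_condExp.restrict,
      ← ofReal_integral_norm_eq_lintegral_enorm hf.restrict]
    exact ENNReal.ofReal_le_ofReal (setIntegral_norm_condExp_le hs f)
  · simp [condExp_of_not_integrable hf]

lemma setLIntegral_enorm_le_add_lintegral_enorm_condExp_sub (hm : m ≤ m0)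
    [SigmaFinite (μ.trim hm)] (hs : MeasurableSet[m] s) {f g : Ω → E}
    (hf : StronglyMeasurable[m] f) (hf_int : Integrable f μ) (hg_int : Integrable g μ) :
    ∫⁻ ω in s, ‖f ω‖ₑ ∂μ ≤ ∫⁻ ω in s, ‖g ω‖ₑ ∂μ + ∫⁻ ω, ‖μ[f - g | m] ω‖ₑ ∂μ := by
  have hf_eq : f =ᵐ[μ] μ[g | m] + μ[f - g | m] := by
    filter_upwards [condExp_sub hf_int hg_int m] with ω hω
    simp [hω, condExp_of_stronglyMeasurable hm hf hf_int]
  calc ∫⁻ ω in s, ‖f ω‖ₑ ∂μ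
    _ ≤ ∫⁻ ω in s, (‖μ[g | m] ω‖ₑ + ‖μ[f - g | m] ω‖ₑ) ∂μ := by
      refine lintegral_mono_ae (ae_restrict_of_ae (hf_eq.mono fun ω hω => ?_))
      rw [hω]
      exact enorm_add_le _ _
    _ = ∫⁻ ω in s, ‖μ[g | m] ω‖ₑ ∂μ + ∫⁻ ω in s, ‖μ[f - g | m] ω‖ₑ ∂μ :=
      lintegral_add_right _ (stronglyMeasurable_condExp.mono hm).enorm
    _ ≤ ∫⁻ ω in s, ‖g ω‖ₑ ∂μ + ∫⁻ ω, ‖μ[f - g | m] ω‖ₑ ∂μ :=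
      add_le_add (setLIntegral_enorm_condExp_le hs g) (setLIntegral_le_lintegral s _)

end CondExp

section MeanVariation

variable {Ω E ι : Type*} [NormedAddCommGroup E] [Preorder ι] {m0 : MeasurableSpace Ω}
  {μ : Measure Ω} {ℱ : Filtration ι m0} {Z : ι → Ω → E} {a b : ι}

lemma measurableSet_exists_le_lt_enorm (hZ : StronglyAdapted ℱ Z) {t : ℕ → ι} (ht : Monotone t)
    (ε : ℝ≥0∞) (k : ℕ) : MeasurableSet[ℱ (t k)] {ω | ∃ i ≤ k, ε < ‖Z (t i) ω‖ₑ} := by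
  have h_eq : {ω | ∃ i ≤ k, ε < ‖Z (t i) ω‖ₑ} = ⋃ i ≤ k, {ω | ε < ‖Z (t i) ω‖ₑ} := by ext; simp
  rw [h_eq]
  exact .biUnion (to_countable _) fun i hi =>
    measurableSet_lt measurable_const (hZ.stronglyMeasurable_le (ht hi)).enorm

variable [NormedSpace ℝ E]

variable (μ ℱ Z a b) in
/-- The mean variation of the process `Z` on `[a, b]`: the supremum of
`∑ i ≤ n, E‖E[Z_{t_i} - Z_{t_{i+1}} | ℱ_{t_i}]‖` over all subdivisions
`a = t₀ < t₁ < ⋯ < t_{n+1} = b`. It takes values in `ℝ≥0∞` so that the supremum always makes sense;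
a subdivision is a sequence `t : ℕ → ι` whose terms after `t (n + 1)` are irrelevant. -/
noncomputable def meanVariation : ℝ≥0∞ :=
  ⨆ (n : ℕ) (t : ℕ → ι) (_ : t 0 = a) (_ : t (n + 1) = b) (_ : ∀ i ≤ n, t i < t (i + 1)),
    ∑ i ∈ Finset.range (n + 1), ∫⁻ ω, ‖μ[Z (t i) - Z (t (i + 1)) | ℱ (t i)] ω‖ₑ ∂μ

lemma sum_le_meanVariation {n : ℕ} {t : ℕ → ι} (ht0 : t 0 = a) (htn : t (n + 1) = b)
    (ht : ∀ i ≤ n, t i < t (i + 1)) :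
    ∑ i ∈ Finset.range (n + 1), ∫⁻ ω, ‖μ[Z (t i) - Z (t (i + 1)) | ℱ (t i)] ω‖ₑ ∂μ
      ≤ meanVariation μ ℱ Z a b :=
  le_iSup_of_le n <| le_iSup_of_le t <| le_iSup_of_le ht0 <| le_iSup_of_le htn <|
    le_iSup_of_le ht le_rfl

variable [CompleteSpace E]

lemma meanVariation_le_ofReal {V : ℝ}
    (hV : ∀ (n : ℕ) (t : ℕ → ι), t 0 = a → t (n + 1) = b → (∀ i ≤ n, t i < t (i + 1)) →
      ∫ ω, ∑ i ∈ Finset.range (n + 1), ‖μ[Z (t i) - Z (t (i + 1)) | ℱ (t i)] ω‖ ∂μ ≤ V) :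
    meanVariation μ ℱ Z a b ≤ ENNReal.ofReal V := by
  simp only [meanVariation, iSup_le_iff]
  intro n t ht0 htn ht
  calc ∑ i ∈ Finset.range (n + 1), ∫⁻ ω, ‖μ[Z (t i) - Z (t (i + 1)) | ℱ (t i)] ω‖ₑ ∂μ
    _ = ENNReal.ofReal
        (∫ ω, ∑ i ∈ Finset.range (n + 1), ‖μ[Z (t i) - Z (t (i + 1)) | ℱ (t i)] ω‖ ∂μ) := by
      rw [integral_finsetSum _ fun i _ => integrable_condExp.norm,
        ENNReal.ofReal_sum_of_nonneg fun i _ => integral_nonneg fun ω => norm_nonneg _]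
      simp only [ofReal_integral_norm_eq_lintegral_enorm integrable_condExp]
    _ ≤ ENNReal.ofReal V := ENNReal.ofReal_le_ofReal (hV n t ht0 htn ht)

variable [SigmaFiniteFiltration μ ℱ]

theorem mul_measure_exists_le_lt_enorm_le (hZ : StronglyAdapted ℱ Z) {t : ℕ → ι} (ht : Monotone t)
    (hZ_int : ∀ i, Integrable (Z (t i)) μ) (ε : ℝ≥0∞) (k : ℕ) :
    ε * μ {ω | ∃ i ≤ k, ε < ‖Z (t i) ω‖ₑ} ≤
      ∫⁻ ω in {ω | ∃ i ≤ k, ε < ‖Z (t i) ω‖ₑ}, ‖Z (t k) ω‖ₑ ∂μ +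
        ∑ i ∈ Finset.range k, ∫⁻ ω, ‖μ[Z (t i) - Z (t (i + 1)) | ℱ (t i)] ω‖ₑ ∂μ := by
  let A (k : ℕ) : Set Ω := {ω | ∃ i ≤ k, ε < ‖Z (t i) ω‖ₑ}
  let δ (i : ℕ) : ℝ≥0∞ := ∫⁻ ω, ‖μ[Z (t i) - Z (t (i + 1)) | ℱ (t i)] ω‖ₑ ∂μ
  have hA (k : ℕ) : MeasurableSet[ℱ (t k)] (A k) := measurableSet_exists_le_lt_enorm hZ ht ε k
  change ε * μ (A k) ≤ ∫⁻ ω in A k, ‖Z (t k) ω‖ₑ ∂μ + ∑ i ∈ Finset.range k, δ i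
  induction k with
  | zero =>
    have hA0 : ∀ ω ∈ A 0, ε ≤ ‖Z (t 0) ω‖ₑ := by
      rintro ω ⟨i, hi, hlt⟩
      obtain rfl := Nat.le_zero.1 hi
      exact hlt.le
    simpa using mul_measure_le_setLIntegral (ℱ.le _ _ (hA 0)) hA0
  | succ k ih =>
    let B : Set Ω := A (k + 1) \ A k
    have hA_sub : A k ⊆ A (k + 1) := by
      rintro ω ⟨i, hi, hlt⟩
      exact ⟨i, hi.trans k.le_succ, hlt⟩
    have hA_union : A (k + 1) = A k ∪ B := (union_sdiff_cancel hA_sub).symm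
    have hB : MeasurableSet B := (ℱ.le _ _ (hA (k + 1))).diff (ℱ.le _ _ (hA k))
    have hB_lt : ∀ ω ∈ B, ε ≤ ‖Z (t (k + 1)) ω‖ₑ := by
      rintro ω ⟨⟨i, hi, hlt⟩, hω⟩
      obtain rfl : i = k + 1 := hi.eq_of_not_lt fun hik => hω ⟨i, Nat.le_of_lt_succ hik, hlt⟩
      exact hlt.le
    have h_step : ∫⁻ ω in A k, ‖Z (t k) ω‖ₑ ∂μ ≤ ∫⁻ ω in A k, ‖Z (t (k + 1)) ω‖ₑ ∂μ + δ k :=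
      setLIntegral_enorm_le_add_lintegral_enorm_condExp_sub (ℱ.le _) (hA k) (hZ _) (hZ_int _)
        (hZ_int _)
    calc ε * μ (A (k + 1))
      _ = ε * μ (A k) + ε * μ B := by
        rw [hA_union, measure_union disjoint_sdiff_right hB, mul_add]
      _ ≤ (∫⁻ ω in A k, ‖Z (t (k + 1)) ω‖ₑ ∂μ + δ k + ∑ i ∈ Finset.range k, δ i) +
          ∫⁻ ω in B, ‖Z (t (k + 1)) ω‖ₑ ∂μ :=
        add_le_add (ih.trans (add_le_add_left h_step _)) (mul_measure_le_setLIntegral hB hB_lt)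
      _ = ∫⁻ ω in A (k + 1), ‖Z (t (k + 1)) ω‖ₑ ∂μ + ∑ i ∈ Finset.range (k + 1), δ i := by
        rw [hA_union, lintegral_union hB disjoint_sdiff_right, Finset.sum_range_succ]
        ring

end MeanVariation

section MaximalInequality

variable {Ω E ι : Type*} [NormedAddCommGroup E] [NormedSpace ℝ E] [CompleteSpace E]
  [LinearOrder ι] {m0 : MeasurableSpace Ω} {μ : Measure Ω} {ℱ : Filtration ι m0}
  [SigmaFiniteFiltration μ ℱ] {Z : ι → Ω → E} {a b : ι}

lemma mul_measure_exists_mem_finset_lt_enorm_le (hab : a < b) (hZ : StronglyAdapted ℱ Z)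
    (hZ_int : ∀ t ∈ Icc a b, Integrable (Z t) μ) (ε : ℝ≥0∞) {F : Finset ι}
    (hF : (F : Set ι) ⊆ Icc a b) :
    ε * μ {ω | ∃ s ∈ F, ε < ‖Z s ω‖ₑ} ≤ meanVariation μ ℱ Z a b + ∫⁻ ω, ‖Z b ω‖ₑ ∂μ := by
  obtain ⟨n, t, ht_mono, ht0, htn, ht_lt, ht_mem, hFt⟩ := exists_monotone_subdivision hab hF
  have h_sub : {ω | ∃ s ∈ F, ε < ‖Z s ω‖ₑ} ⊆ {ω | ∃ i ≤ n + 1, ε < ‖Z (t i) ω‖ₑ} := by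
    rintro ω ⟨s, hs, hlt⟩
    obtain ⟨i, hi, rfl⟩ := hFt s hs
    exact ⟨i, hi, hlt⟩
  calc ε * μ {ω | ∃ s ∈ F, ε < ‖Z s ω‖ₑ}
    _ ≤ ε * μ {ω | ∃ i ≤ n + 1, ε < ‖Z (t i) ω‖ₑ} := by gcongr
    _ ≤ ∫⁻ ω in {ω | ∃ i ≤ n + 1, ε < ‖Z (t i) ω‖ₑ}, ‖Z (t (n + 1)) ω‖ₑ ∂μ +
        ∑ i ∈ Finset.range (n + 1), ∫⁻ ω, ‖μ[Z (t i) - Z (t (i + 1)) | ℱ (t i)] ω‖ₑ ∂μ :=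
      mul_measure_exists_le_lt_enorm_le hZ ht_mono (fun i => hZ_int _ (ht_mem i)) ε (n + 1)
    _ ≤ ∫⁻ ω, ‖Z b ω‖ₑ ∂μ + meanVariation μ ℱ Z a b := by
      rw [htn]
      exact add_le_add (setLIntegral_le_lintegral _ _) (sum_le_meanVariation ht0 htn ht_lt)
    _ = meanVariation μ ℱ Z a b + ∫⁻ ω, ‖Z b ω‖ₑ ∂μ := add_comm _ _

lemma mul_measure_exists_mem_countable_lt_enorm_le (hab : a < b) (hZ : StronglyAdapted ℱ Z)
    (hZ_int : ∀ t ∈ Icc a b, Integrable (Z t) μ) (ε : ℝ≥0∞) {S : Set ι} (hS : S.Countable)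
    (hS_sub : S ⊆ Icc a b) :
    ε * μ {ω | ∃ s ∈ S, ε < ‖Z s ω‖ₑ} ≤ meanVariation μ ℱ Z a b + ∫⁻ ω, ‖Z b ω‖ₑ ∂μ := by
  have := hS.to_subtype
  have h_eq : {ω | ∃ s ∈ S, ε < ‖Z s ω‖ₑ} = ⋃ s : S, {ω | ε < ‖Z s ω‖ₑ} := by ext; simp
  rw [h_eq, measure_iUnion_eq_iSup_finset, ENNReal.mul_iSup]
  refine iSup_le fun F => ?_
  have hF_sub : (F.map (Function.Embedding.subtype _) : Set ι) ⊆ Icc a b := by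
    rw [Finset.coe_map]
    rintro _ ⟨s, -, rfl⟩
    exact hS_sub s.2
  have hF_eq : ⋃ s ∈ F, {ω | ε < ‖Z s ω‖ₑ} =
      {ω | ∃ s ∈ F.map (Function.Embedding.subtype _), ε < ‖Z s ω‖ₑ} := by ext; simp
  rw [hF_eq]
  exact mul_measure_exists_mem_finset_lt_enorm_le hab hZ hZ_int ε hF_sub

variable [TopologicalSpace ι] [OrderTopology ι] [SecondCountableTopology ι]

theorem mul_measure_exists_mem_Icc_lt_enorm_le (hab : a < b) (hZ : StronglyAdapted ℱ Z)
    (hZ_rc : ∀ ω, ∀ t ∈ Ico a b, ContinuousWithinAt (fun s => Z s ω) (Ici t) t)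
    (hZ_int : ∀ t ∈ Icc a b, Integrable (Z t) μ) (ε : ℝ≥0∞) :
    ε * μ {ω | ∃ t ∈ Icc a b, ε < ‖Z t ω‖ₑ} ≤
      meanVariation μ ℱ Z a b + ∫⁻ ω, ‖Z b ω‖ₑ ∂μ := by
  obtain ⟨S, hS_sub, hS_countable, hS⟩ := exists_countable_subset_Icc_frequently_nhdsGE hab.le
  have h_sub : {ω | ∃ t ∈ Icc a b, ε < ‖Z t ω‖ₑ} ⊆ {ω | ∃ s ∈ S, ε < ‖Z s ω‖ₑ} :=
    fun ω ⟨_, ht, hlt⟩ => exists_mem_of_forall_frequently_nhdsGE hS_sub hS (hZ_rc ω)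
      (isOpen_lt continuous_const continuous_enorm) ht hlt
  grw [h_sub]
  exact mul_measure_exists_mem_countable_lt_enorm_le hab hZ hZ_int ε hS_countable hS_sub

-- Stated with `∃ t` rather than a supremum, since the real `sSup` is `0` on unbounded paths.
theorem stmt_4_general (hab : a < b) (hZ : StronglyAdapted ℱ Z)
    (hZ_rc : ∀ ω, ∀ t ∈ Ico a b, ContinuousWithinAt (fun s => Z s ω) (Ici t) t)
    (hZ_int : ∀ t ∈ Icc a b, Integrable (Z t) μ) {V : ℝ}
    (hV : ∀ (n : ℕ) (t : ℕ → ι), t 0 = a → t (n + 1) = b → (∀ i ≤ n, t i < t (i + 1)) →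
      ∫ ω, ∑ i ∈ Finset.range (n + 1), ‖μ[Z (t i) - Z (t (i + 1)) | ℱ (t i)] ω‖ ∂μ ≤ V)
    {h : ℝ} (hh : 0 ≤ h) :
    h * μ.real {ω | ∃ t ∈ Icc a b, h < ‖Z t ω‖} ≤ V + ∫ ω, ‖Z b ω‖ ∂μ := by
  have hV_nonneg : 0 ≤ V := by
    obtain ⟨n, t, -, ht0, htn, ht, -⟩ := exists_monotone_subdivision (F := ∅) hab (by simp)
    exact (integral_nonneg fun ω => Finset.sum_nonneg fun i _ => norm_nonneg _).trans
      (hV n t ht0 htn ht)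
  have hZb_nonneg : 0 ≤ ∫ ω, ‖Z b ω‖ ∂μ := integral_nonneg fun ω => norm_nonneg _
  have h_lt_iff (t : ι) (ω : Ω) : h < ‖Z t ω‖ ↔ ENNReal.ofReal h < ‖Z t ω‖ₑ := by
    rw [← ofReal_norm, ENNReal.ofReal_lt_ofReal_iff_of_nonneg hh]
  have h_bound : ENNReal.ofReal h * μ {ω | ∃ t ∈ Icc a b, h < ‖Z t ω‖} ≤
      ENNReal.ofReal (V + ∫ ω, ‖Z b ω‖ ∂μ) := by
    rw [ENNReal.ofReal_add hV_nonneg hZb_nonneg,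
      ofReal_integral_norm_eq_lintegral_enorm (hZ_int b (right_mem_Icc.2 hab.le))]
    simp only [h_lt_iff]
    grw [← meanVariation_le_ofReal hV]
    exact mul_measure_exists_mem_Icc_lt_enorm_le hab hZ hZ_rc hZ_int _
  calc h * μ.real {ω | ∃ t ∈ Icc a b, h < ‖Z t ω‖}
    _ = (ENNReal.ofReal h * μ {ω | ∃ t ∈ Icc a b, h < ‖Z t ω‖}).toReal := by
      rw [ENNReal.toReal_mul, ENNReal.toReal_ofReal hh, measureReal_def]
    _ ≤ V + ∫ ω, ‖Z b ω‖ ∂μ :=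
      ENNReal.toReal_le_of_le_ofReal (add_nonneg hV_nonneg hZb_nonneg) h_bound

end MaximalInequality

lemma exists_lt_of_lt_sSup_image {α β : Type*} [ConditionallyCompleteLinearOrder β] {s : Set α}
    (hs : s.Nonempty) {f : α → β} {c : β} (h : c < sSup (f '' s)) : ∃ x ∈ s, c < f x :=
  exists_mem_image.1 (exists_lt_of_lt_csSup (hs.image f) h)

end

/-- Kurtz's maximal inequality for quasi-martingales: if `Z` is a right-continuous adapted
integrable process on `[0,T]` whose mean variation over every finite subdivision of `[0,T]`
is bounded by `V`, then `h * P(sup_{t ∈ [0,T]} |Z t| > h) ≤ V + E[|Z_T|]` for every `h > 0`. -/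
theorem stmt_4 {Ω : Type*} {m0 : MeasurableSpace Ω} (P : Measure Ω) [IsProbabilityMeasure P]
    (T : ℝ) (hT : 0 < T) (ℱ : Filtration ℝ m0)
    (Z : ℝ → Ω → ℝ)
    (hZ_adapted : Adapted ℱ Z)
    (hZ_rc : ∀ ω : Ω, ∀ t ∈ Ico 0 T, ContinuousWithinAt (fun s => Z s ω) (Ici t) t)
    (hZ_int : ∀ t ∈ Icc 0 T, Integrable (Z t) P)
    (V : ℝ)
    (hV : ∀ (n : ℕ) (t : ℕ → ℝ), t 0 = 0 → t (n + 1) = T → (∀ i ≤ n, t i < t (i + 1)) →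
      (∫ ω, ∑ i ∈ Finset.range (n + 1),
        |(P[(fun ω => Z (t i) ω - Z (t (i + 1)) ω) | ℱ (t i)]) ω| ∂P) ≤ V) :
    ∀ h : ℝ, 0 < h →
      h * (P {ω | h < sSup ((fun t => |Z t ω|) '' Icc 0 T)}).toReal
        ≤ V + ∫ ω, |Z T ω| ∂P := fun h hh =>
  (mul_le_mul_of_nonneg_left (measureReal_mono fun _ hω =>
    exists_lt_of_lt_sSup_image (nonempty_Icc.2 hT.le) hω) hh.le).trans
    (stmt_4_general hT hZ_adapted.stronglyAdapted hZ_rc hZ_int hV hh.le)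
end

section
/- Let T > 0, let a : [0,T] → ℝ be a bounded measurable function, let μ be a finite nonnegative Borel measure on [0,T], and let Y : [0,T] → ℝ be a bounded measurable function satisfying Y(t) = ∫₀^t a(s) Y(s) ds + μ([0,t]) for every t ∈ [0,T]. Then for every t ∈ [0,T], Y(t) = ∫_{[0,t]} exp( ∫_s^t a(u) du ) dμ(s); consequently, writing M = sup_{s ∈ [0,T]} |a(s)|, one has Y(t) ≥ e^{−M t} μ([0,t]) for every t ∈ [0,T], and in particular Y(t) > 0 whenever μ([0,t]) > 0. -/
open MeasureTheory Real Set

/-!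
Fix `t` and put `φ s = exp (∫ u in s..t, a u)`, which is absolutely continuous with `φ' = -a φ`
almost everywhere. If `Y x = ∫ s in c..x, a s * Y s + h x`, differentiating
`φ x * ∫ s in c..x, a s * Y s` gives `a φ Y - a φ (Y - h) = h a φ`, so that every solution
satisfies the resolvent formula `Y t = h t + ∫ s in c..t, h s * (a s * φ s)`. When `h x = μ [c, x]`,
Fubini's theorem turns the last integral into `∫ (φ s - 1) dμ(s)` over `[c, t]`, whose `-1`
cancels `h t`.
-/

lemma absolutelyContinuousOnInterval_comp_of_lipschitzOnWith {X Y : Type*} [PseudoMetricSpace X]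
    [PseudoMetricSpace Y] {g : X → Y} {f : ℝ → X} {K : NNReal} {a b : ℝ}
    (hg : LipschitzOnWith K g (f '' uIcc a b)) (hf : AbsolutelyContinuousOnInterval f a b) :
    AbsolutelyContinuousOnInterval (g ∘ f) a b := by
  have h_lim := Filter.Tendsto.const_mul (K : ℝ) hf
  rw [mul_zero] at h_lim
  refine squeeze_zero' (.of_forall fun I => Finset.sum_nonneg fun i _ => dist_nonneg) ?_ h_lim
  filter_upwards [Filter.mem_inf_of_right (Filter.mem_principal_self _)] with I hI
  rw [Finset.mul_sum]
  refine Finset.sum_le_sum fun i hi => ?_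
  obtain ⟨h_left, h_right⟩ := hI.1 i hi
  exact hg.dist_le_mul _ (mem_image_of_mem f h_left) _ (mem_image_of_mem f h_right)

lemma absolutelyContinuousOnInterval_comp_of_locallyLipschitzOn {F Y : Type*}
    [SeminormedAddCommGroup F] [PseudoMetricSpace Y] {g : F → Y} {f : ℝ → F} {a b : ℝ}
    (hg : LocallyLipschitzOn (f '' uIcc a b) g) (hf : AbsolutelyContinuousOnInterval f a b) :
    AbsolutelyContinuousOnInterval (g ∘ f) a b := by
  have h_compact : IsCompact (f '' uIcc a b) :=
    isCompact_uIcc.image_of_continuousOn hf.continuousOn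
  obtain ⟨K, hK⟩ := hg.exists_lipschitzOnWith_of_compact h_compact
  exact absolutelyContinuousOnInterval_comp_of_lipschitzOnWith hK hf

lemma intervalIntegrable_of_forall_norm_le {E : Type*} [NormedAddCommGroup E] {f : ℝ → E}
    {c t K : ℝ} (hct : c ≤ t) (hf : AEStronglyMeasurable f (volume.restrict (Icc c t)))
    (hK : ∀ s ∈ Icc c t, ‖f s‖ ≤ K) : IntervalIntegrable f volume c t :=
  (intervalIntegrable_iff_integrableOn_Icc_of_le hct).2 <|
    .of_bound measure_Icc_lt_top hf K (ae_restrict_of_forall_mem measurableSet_Icc hK)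

lemma integral_abs_le_sSup_mul {f : ℝ → ℝ} {c t T : ℝ} (ht : t ∈ Icc c T)
    (hf : BddAbove ((fun s => |f s|) '' Icc c T)) :
    ∫ s in c..t, |f s| ≤ sSup ((fun s => |f s|) '' Icc c T) * (t - c) := by
  have h_le : ∀ s ∈ uIoc c t, ‖|f s|‖ ≤ sSup ((fun s => |f s|) '' Icc c T) := fun s hs => by
    rw [uIoc_of_le ht.1] at hs
    rw [norm_eq_abs, abs_abs]
    exact le_csSup hf (mem_image_of_mem _ ⟨hs.1.le, hs.2.trans ht.2⟩)
  simpa only [abs_of_nonneg (sub_nonneg.2 ht.1)] using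
    (le_abs_self _).trans (intervalIntegral.norm_integral_le_of_norm_le_const h_le)

section ExpIntegral

variable {a : ℝ → ℝ} {c t : ℝ}

lemma absolutelyContinuousOnInterval_exp_integral (ha : IntervalIntegrable a volume c t) :
    AbsolutelyContinuousOnInterval (fun s => exp (∫ u in s..t, a u)) c t := by
  have h_int : AbsolutelyContinuousOnInterval (fun s => ∫ u in s..t, a u) c t := by
    simpa only [← intervalIntegral.integral_symm] using
      (ha.absolutelyContinuousOnInterval_intervalIntegral right_mem_uIcc).fun_neg
  exact absolutelyContinuousOnInterval_comp_of_locallyLipschitzOn (g := exp)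
    contDiff_exp.locallyLipschitz.locallyLipschitzOn h_int

lemma ae_hasDerivAt_exp_integral (ha : IntervalIntegrable a volume c t) :
    ∀ᵐ s, s ∈ uIcc c t →
      HasDerivAt (fun s => exp (∫ u in s..t, a u)) (-(a s * exp (∫ u in s..t, a u))) s := by
  filter_upwards [ha.ae_hasDerivAt_integral] with s h_deriv hs
  have h_int : HasDerivAt (fun s => ∫ u in s..t, a u) (-a s) s := by
    simpa only [← intervalIntegral.integral_symm] using (h_deriv hs t right_mem_uIcc).fun_neg
  convert h_int.exp using 1
  ring

lemma integral_mul_exp_integral (ha : IntervalIntegrable a volume c t) :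
    ∫ s in c..t, a s * exp (∫ u in s..t, a u) = exp (∫ u in c..t, a u) - 1 := by
  have h_ftc := (absolutelyContinuousOnInterval_exp_integral ha).integral_deriv_eq_sub
  have h_congr : ∫ s in c..t, deriv (fun s => exp (∫ u in s..t, a u)) s =
      ∫ s in c..t, -(a s * exp (∫ u in s..t, a u)) := by
    apply intervalIntegral.integral_congr_ae
    filter_upwards [ae_hasDerivAt_exp_integral ha] with s h_deriv hs
    exact (h_deriv (uIoc_subset_uIcc hs)).deriv
  rw [h_congr, intervalIntegral.integral_neg, intervalIntegral.integral_same, exp_zero] at h_ftc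
  linarith

lemma intervalIntegrable_mul_exp_integral (ha : IntervalIntegrable a volume c t) :
    IntervalIntegrable (fun s => a s * exp (∫ u in s..t, a u)) volume c t :=
  ha.mul_continuousOn (absolutelyContinuousOnInterval_exp_integral ha).continuousOn

lemma integrableOn_exp_integral (ha : IntervalIntegrable a volume c t) (μ : Measure ℝ)
    [IsLocallyFiniteMeasure μ] :
    IntegrableOn (fun s => exp (∫ u in s..t, a u)) (Icc c t) μ :=
  ((absolutelyContinuousOnInterval_exp_integral ha).continuousOn.mono
    Icc_subset_uIcc).integrableOn_Icc

lemma exp_neg_integral_abs_mul_measureReal_le (ha : IntervalIntegrable a volume c t)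
    (μ : Measure ℝ) [IsLocallyFiniteMeasure μ] :
    exp (-∫ u in c..t, |a u|) * μ.real (Icc c t) ≤
      ∫ s in Icc c t, exp (∫ u in s..t, a u) ∂μ := by
  have h_le : ∀ s ∈ Icc c t, -∫ u in c..t, |a u| ≤ ∫ u in s..t, a u := fun s hs =>
    neg_le_of_abs_le <| calc
      |∫ u in s..t, a u| ≤ ∫ u in s..t, |a u| :=
        intervalIntegral.abs_integral_le_integral_abs hs.2
      _ ≤ ∫ u in c..t, |a u| :=
        intervalIntegral.integral_mono_interval hs.1 hs.2 le_rfl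
          (.of_forall fun u => abs_nonneg (a u)) ha.abs
  calc exp (-∫ u in c..t, |a u|) * μ.real (Icc c t)
      = ∫ _ in Icc c t, exp (-∫ u in c..t, |a u|) ∂μ := by
        rw [setIntegral_const, smul_eq_mul, mul_comm]
    _ ≤ ∫ s in Icc c t, exp (∫ u in s..t, a u) ∂μ :=
        setIntegral_mono_on (integrableOn_const measure_Icc_lt_top.ne)
          (integrableOn_exp_integral ha μ) measurableSet_Icc
          fun s hs => exp_le_exp.2 (h_le s hs)

end ExpIntegral

lemma integral_measureReal_Icc_smul {E : Type*} [NormedAddCommGroup E] [NormedSpace ℝ E]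
    [CompleteSpace E] {g : ℝ → E} {c t : ℝ} (hct : c ≤ t)
    (hg : IntervalIntegrable g volume c t) (μ : Measure ℝ) [IsLocallyFiniteMeasure μ] :
    ∫ x in c..t, μ.real (Icc c x) • g x = ∫ s in Icc c t, (∫ x in s..t, g x) ∂μ := by
  have : IsFiniteMeasure (μ.restrict (Icc c t)) := isFiniteMeasure_restrict.2 measure_Icc_lt_top.ne
  have h_integrable : Integrable (fun p : ℝ × ℝ => (Ici p.2).indicator g p.1)
      ((volume.restrict (uIoc c t)).prod (μ.restrict (Icc c t))) :=
    ((intervalIntegrable_iff.1 hg).comp_fst (μ.restrict (Icc c t))).indicator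
      (measurableSet_le measurable_snd measurable_fst)
  have h_inner_s : ∀ x ∈ uIcc c t,
      μ.real (Icc c x) • g x = ∫ s in Icc c t, (Ici s).indicator g x ∂μ := by
    intro x hx
    have h_swap : ∀ s, (Ici s).indicator g x = (Iic x).indicator (fun _ => g x) s := fun s => by
      simp only [indicator_apply, mem_Ici, mem_Iic]
    have h_inter : Icc c t ∩ Iic x = Icc c x := by
      rw [← Ici_inter_Iic, inter_assoc, Iic_inter_Iic, inf_eq_right.2 (uIcc_of_le hct ▸ hx).2,
        Ici_inter_Iic]
    simp only [h_swap, setIntegral_indicator measurableSet_Iic, h_inter, setIntegral_const]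
  have h_inner_x : ∀ s ∈ Icc c t, ∫ x in c..t, (Ici s).indicator g x = ∫ x in s..t, g x := by
    intro s hs
    have h_inter : (Ioc c t ∩ Ici s : Set ℝ) =ᵐ[volume] (Ioc s t : Set ℝ) := by
      rw [← sup_eq_right.2 hs.1, ← Ioc_inter_Ioi, sup_eq_right.2 hs.1]
      exact (Filter.EventuallyEq.refl _ _).inter Ioi_ae_eq_Ici.symm
    rw [intervalIntegral.integral_of_le hct, intervalIntegral.integral_of_le hs.2,
      setIntegral_indicator measurableSet_Ici, setIntegral_congr_set h_inter]
  rw [intervalIntegral.integral_congr h_inner_s, intervalIntegral_integral_swap h_integrable]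
  exact setIntegral_congr_fun measurableSet_Icc h_inner_x

section LinearIntegralEquation

variable {a Y : ℝ → ℝ} {c t : ℝ}

lemma eq_add_integral_of_linear_integral_equation {h : ℝ → ℝ}
    (ha : IntervalIntegrable a volume c t)
    (haY : IntervalIntegrable (fun s => a s * Y s) volume c t)
    (hY : ∀ x ∈ uIcc c t, Y x = (∫ s in c..x, a s * Y s) + h x) :
    Y t = h t + ∫ s in c..t, h s * (a s * exp (∫ u in s..t, a u)) := by
  let φ : ℝ → ℝ := fun s => exp (∫ u in s..t, a u)
  let F : ℝ → ℝ := fun x => ∫ s in c..x, a s * Y s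
  have hF : AbsolutelyContinuousOnInterval F c t :=
    haY.absolutelyContinuousOnInterval_intervalIntegral left_mem_uIcc
  have h_deriv : ∫ s in c..t, deriv φ s * F s + φ s * deriv F s =
      ∫ s in c..t, h s * (a s * φ s) := by
    apply intervalIntegral.integral_congr_ae
    filter_upwards [ae_hasDerivAt_exp_integral ha, haY.ae_hasDerivAt_integral]
      with s hφ_deriv hF_deriv hs
    have hs : s ∈ uIcc c t := uIoc_subset_uIcc hs
    rw [(hφ_deriv hs).deriv, (hF_deriv hs c left_mem_uIcc).deriv]
    linear_combination a s * φ s * hY s hs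
  calc Y t = h t + F t := by rw [hY t right_mem_uIcc, add_comm]
    _ = h t + (φ t * F t - φ c * F c) := by simp [φ, F]
    _ = h t + ∫ s in c..t, h s * (a s * φ s) := by
      rw [← h_deriv,
        (absolutelyContinuousOnInterval_exp_integral ha).integral_deriv_mul_eq_sub hF]

lemma eq_setIntegral_exp_of_linear_integral_equation (hct : c ≤ t)
    (ha : IntervalIntegrable a volume c t)
    (haY : IntervalIntegrable (fun s => a s * Y s) volume c t)
    (μ : Measure ℝ) [IsLocallyFiniteMeasure μ]
    (hY : ∀ x ∈ Icc c t, Y x = (∫ s in c..x, a s * Y s) + μ.real (Icc c x)) :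
    Y t = ∫ s in Icc c t, exp (∫ u in s..t, a u) ∂μ := by
  have h_fubini : ∫ x in c..t, μ.real (Icc c x) * (a x * exp (∫ u in x..t, a u)) =
      ∫ s in Icc c t, (exp (∫ u in s..t, a u) - 1) ∂μ := by
    refine (integral_measureReal_Icc_smul hct (intervalIntegrable_mul_exp_integral ha) μ).trans ?_
    refine setIntegral_congr_fun measurableSet_Icc fun s hs => integral_mul_exp_integral ?_
    exact ha.mono_set (uIcc_subset_uIcc_right (Icc_subset_uIcc hs))
  rw [eq_add_integral_of_linear_integral_equation ha haY (uIcc_of_le hct ▸ hY), h_fubini,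
    integral_sub (integrableOn_exp_integral ha μ) (integrableOn_const measure_Icc_lt_top.ne),
    setIntegral_const, smul_eq_mul, mul_one, add_sub_cancel]

end LinearIntegralEquation

theorem stmt_6_general {a Y : ℝ → ℝ} {c T : ℝ} (ha : IntervalIntegrable a volume c T)
    (haY : IntervalIntegrable (fun s => a s * Y s) volume c T)
    (μ : Measure ℝ) [IsLocallyFiniteMeasure μ]
    (hY : ∀ t ∈ Icc c T, Y t = (∫ s in c..t, a s * Y s) + μ.real (Icc c t)) :
    (∀ t ∈ Icc c T, Y t = ∫ s in Icc c t, exp (∫ u in s..t, a u) ∂μ) ∧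
    (∀ t ∈ Icc c T, exp (-∫ u in c..t, |a u|) * μ.real (Icc c t) ≤ Y t) ∧
    (∀ t ∈ Icc c T, 0 < μ (Icc c t) → 0 < Y t) := by
  have h_sub : ∀ t ∈ Icc c T, uIcc c t ⊆ uIcc c T := fun t ht =>
    uIcc_subset_uIcc_left (Icc_subset_uIcc ht)
  have h_formula : ∀ t ∈ Icc c T, Y t = ∫ s in Icc c t, exp (∫ u in s..t, a u) ∂μ :=
    fun t ht => eq_setIntegral_exp_of_linear_integral_equation ht.1 (ha.mono_set (h_sub t ht))
      (haY.mono_set (h_sub t ht)) μ fun x hx => hY x ⟨hx.1, hx.2.trans ht.2⟩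
  have h_lower : ∀ t ∈ Icc c T, exp (-∫ u in c..t, |a u|) * μ.real (Icc c t) ≤ Y t :=
    fun t ht => h_formula t ht ▸
      exp_neg_integral_abs_mul_measureReal_le (ha.mono_set (h_sub t ht)) μ
  refine ⟨h_formula, h_lower, fun t ht hμ => lt_of_lt_of_le ?_ (h_lower t ht)⟩
  exact mul_pos (exp_pos _) (ENNReal.toReal_pos hμ.ne' measure_Icc_lt_top.ne)

/-- Variation-of-constants for a linear integral equation driven by a finite measure:
if `Y t = ∫₀^t a s * Y s ds + μ [0,t]` on `[0,T]`, then
`Y t = ∫_{[0,t]} exp (∫_s^t a) dμ(s)`; hence, with `M = sup_{[0,T]} |a|`,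
`Y t ≥ e^{-M t} μ [0,t]`, and `Y t > 0` whenever `μ [0,t] > 0`. -/
theorem stmt_6 (T : ℝ) (hT : 0 < T) (a : ℝ → ℝ) (ha_meas : Measurable a)
    (ha_bdd : ∃ K, ∀ s ∈ Icc 0 T, |a s| ≤ K)
    (μ : Measure ℝ) [IsFiniteMeasure μ]
    (Y : ℝ → ℝ) (hY_meas : Measurable Y) (hY_bdd : ∃ K, ∀ t ∈ Icc 0 T, |Y t| ≤ K)
    (hY : ∀ t ∈ Icc 0 T, Y t = (∫ s in (0:ℝ)..t, a s * Y s) + (μ (Icc 0 t)).toReal) :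
    (∀ t ∈ Icc 0 T, Y t = ∫ s in Icc (0:ℝ) t, Real.exp (∫ u in s..t, a u) ∂μ) ∧
    (∀ t ∈ Icc 0 T,
      Real.exp (-(sSup ((fun s => |a s|) '' Icc 0 T)) * t) * (μ (Icc 0 t)).toReal ≤ Y t) ∧
    (∀ t ∈ Icc 0 T, 0 < μ (Icc 0 t) → 0 < Y t) := by
  obtain ⟨K, hK⟩ := ha_bdd
  obtain ⟨L, hL⟩ := hY_bdd
  have haY_bdd : ∀ s ∈ Icc 0 T, ‖a s * Y s‖ ≤ K * L := fun s hs =>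
    norm_mul_le_of_le (hK s hs) (hL s hs)
  obtain ⟨h_formula, h_lower, h_pos⟩ := stmt_6_general
    (intervalIntegrable_of_forall_norm_le hT.le ha_meas.aestronglyMeasurable hK)
    (intervalIntegrable_of_forall_norm_le hT.le (ha_meas.mul hY_meas).aestronglyMeasurable
      haY_bdd) μ hY
  refine ⟨h_formula, fun t ht => le_trans ?_ (h_lower t ht), h_pos⟩
  refine mul_le_mul_of_nonneg_right (exp_le_exp.2 ?_) measureReal_nonneg
  simpa only [sub_zero, neg_mul, neg_le_neg_iff] using
    integral_abs_le_sSup_mul ht ⟨K, forall_mem_image.2 hK⟩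
end
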